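/- arXiv:1906.04453 — 12 statements merged into one kernel-verified Lean document; each statement's English description precedes it below -/
import Mathlib

section
/- For every integer m ≥ 2, the function γ ↦ s_m(γ) is strictly increasing on the interval (-1/4, 0); that is, if -1/4 < γ₁ < γ₂ < 0 then s_m(γ₁) < s_m(γ₂). -/
/-!
With `a, b` the roots of `x² = x + γ`, one has `s m γ = a ^ m + b ^ m`. Its companion
`d m γ = (a ^ m - b ^ m) / (a - b)` satisfies, with `D = (a - b) ^ 2 = 1 + 4 γ`,
`s (m + 1) = (s m + D * d m) / 2` and `d (m + 1) = (d m + s m) / 2`.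
For `γ > -1/4` all quantities in this joint recursion are nonnegative and `D` is strictly
increasing in `γ`, so `s` and `d` are nondecreasing in `γ` by induction. As `d m > 0` for `m ≥ 1`,
the term `D * d m` makes `s (m + 1)` strictly increasing.
-/

noncomputable def s : ℕ → ℝ → ℝ
  | 0, _ => 2
  | 1, _ => 1
  | (m + 2), γ => s (m + 1) γ + γ * s m γ

/-- The Lucas companion `(a ^ m - b ^ m) / (a - b)` of `s m γ = a ^ m + b ^ m`, defined by the
joint recursion so that no square roots are needed. -/
noncomputable def lucasCompanion : ℕ → ℝ → ℝ
  | 0, _ => 0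
  | (m + 1), γ => (lucasCompanion m γ + s m γ) / 2

lemma s_succ_eq (m : ℕ) (γ : ℝ) :
    s (m + 1) γ = (s m γ + (1 + 4 * γ) * lucasCompanion m γ) / 2 := by
  induction m with
  | zero => simp [s, lucasCompanion]
  | succ k ih =>
    simp only [s, lucasCompanion]
    linarith

lemma s_pos_and_lucasCompanion_nonneg (m : ℕ) {γ : ℝ} (h : -1/4 < γ) :
    0 < s m γ ∧ 0 ≤ lucasCompanion m γ := by
  induction m with
  | zero => simp [s, lucasCompanion]
  | succ k ih =>
    obtain ⟨hs, hd⟩ := ih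
    have hD : 0 ≤ 1 + 4 * γ := by linarith
    have := mul_nonneg hD hd
    rw [s_succ_eq, lucasCompanion]
    constructor <;> linarith

lemma s_and_lucasCompanion_mono (m : ℕ) {γ₁ γ₂ : ℝ} (h₁ : -1/4 < γ₁) (h₁₂ : γ₁ < γ₂) :
    s m γ₁ ≤ s m γ₂ ∧ lucasCompanion m γ₁ ≤ lucasCompanion m γ₂ := by
  induction m with
  | zero => simp [s, lucasCompanion]
  | succ k ih =>
    obtain ⟨hs, hd⟩ := ih
    have hd₁ := (s_pos_and_lucasCompanion_nonneg k h₁).2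
    have : (1 + 4 * γ₁) * lucasCompanion k γ₁ ≤ (1 + 4 * γ₂) * lucasCompanion k γ₂ :=
      mul_le_mul (by linarith) hd hd₁ (by linarith)
    rw [s_succ_eq, s_succ_eq, lucasCompanion, lucasCompanion]
    constructor <;> linarith

theorem stmt_3 (m : ℕ) (hm : 2 ≤ m) (γ₁ γ₂ : ℝ)
    (h₁ : -1/4 < γ₁) (h₁₂ : γ₁ < γ₂) (h₂ : γ₂ < 0) :
    s m γ₁ < s m γ₂ := by
  obtain ⟨k, rfl⟩ := Nat.exists_eq_add_of_le' hm
  obtain ⟨hs, hd⟩ := s_and_lucasCompanion_mono (k + 1) h₁ h₁₂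
  have hpos : 0 < lucasCompanion (k + 1) γ₁ := by
    have := s_pos_and_lucasCompanion_nonneg k h₁
    rw [lucasCompanion]
    linarith
  have : (1 + 4 * γ₁) * lucasCompanion (k + 1) γ₁ < (1 + 4 * γ₂) * lucasCompanion (k + 1) γ₂ :=
    mul_lt_mul (by linarith) hd hpos (by linarith)
  rw [s_succ_eq (k + 1), s_succ_eq (k + 1)]
  linarith
end

section
/- Let p, k, Δn be positive integers. The equation -k^{2p} + (Δn)^{2p}·s_{2p+1}(γ) = 0 has a real root γ in the open interval (-1/4, 0) if and only if k < Δn < 2k. -/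
lemma s_binet (a : ℝ) (m : ℕ) : s m (-(a * (1 - a))) = a ^ m + (1 - a) ^ m := by
  induction m using Nat.twoStepInduction with
  | zero => norm_num [s]
  | one => simp [s]
  | more n h0 h1 => rw [s, h0, h1]; ring

lemma pow_sum_lt_one {a : ℝ} (h0 : 0 < a) (h1 : a < 1) {n : ℕ} (hn : 1 < n) :
    a ^ n + (1 - a) ^ n < 1 := by
  have h2 := pow_lt_self_of_lt_one₀ h0 h1 hn
  have h3 := pow_lt_self_of_lt_one₀ (sub_pos.2 h1) (by linarith) hn
  linarith

/-- Strict convexity of `x ↦ x ^ (2p+1)` on `[0, ∞)`, applied at the midpoint of `a` and `1 - a`. -/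
lemma half_pow_lt_pow_sum {a : ℝ} (h0 : 1 / 2 < a) (h1 : a < 1) {p : ℕ} (hp : 0 < p) :
    (1 / 2 : ℝ) ^ (2 * p) < a ^ (2 * p + 1) + (1 - a) ^ (2 * p + 1) := by
  have h := (strictConvexOn_pow (n := 2 * p + 1) (by omega)).2
    (show a ∈ Set.Ici (0 : ℝ) from by simp only [Set.mem_Ici]; linarith)
    (show 1 - a ∈ Set.Ici (0 : ℝ) from by simp only [Set.mem_Ici]; linarith)
    (by intro h; linarith) (show (0 : ℝ) < 1 / 2 by norm_num)
    (show (0 : ℝ) < 1 / 2 by norm_num) (by norm_num)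
  simp only [smul_eq_mul] at h
  rw [show 1 / 2 * a + 1 / 2 * (1 - a) = (1 / 2 : ℝ) by ring, pow_succ] at h
  linarith

theorem stmt_6 (p k Δn : ℕ) (hp : 0 < p) (hk : 0 < k) (hΔn : 0 < Δn) :
    (∃ γ : ℝ, -1/4 < γ ∧ γ < 0 ∧
        -(k : ℝ) ^ (2 * p) + (Δn : ℝ) ^ (2 * p) * s (2 * p + 1) γ = 0)
      ↔ (k < Δn ∧ Δn < 2 * k) := by
  have hk' : (0 : ℝ) < k := by exact_mod_cast hk
  have hd : (0 : ℝ) < Δn := by exact_mod_cast hΔn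
  have hdp : (0 : ℝ) < (Δn : ℝ) ^ (2 * p) := by positivity
  have h2p : 2 * p ≠ 0 := by omega
  constructor
  · rintro ⟨γ, hγ1, hγ2, h⟩
    -- `a` is the larger root of `x² = x + γ`.
    obtain ⟨a, ha0, ha1, rfl⟩ : ∃ a : ℝ, 1 / 2 < a ∧ a < 1 ∧ γ = -(a * (1 - a)) := by
      have hs := Real.sq_sqrt (show 0 ≤ 1 + 4 * γ by linarith)
      have hs0 : 0 < √(1 + 4 * γ) := Real.sqrt_pos.2 (by linarith)
      have hs1 : √(1 + 4 * γ) < 1 := by nlinarith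
      exact ⟨(1 + √(1 + 4 * γ)) / 2, by linarith, by linarith, by nlinarith⟩
    rw [s_binet] at h
    have hlo := mul_lt_mul_of_pos_left (half_pow_lt_pow_sum ha0 ha1 hp) hdp
    have hhi := mul_lt_mul_of_pos_left
      (pow_sum_lt_one (show 0 < a by linarith) ha1 (show 1 < 2 * p + 1 by omega)) hdp
    rw [← mul_pow] at hlo
    have h1 : (k : ℝ) < Δn := lt_of_pow_lt_pow_left₀ (2 * p) hd.le (by linarith)
    have h2 : (Δn : ℝ) * (1 / 2) < k := lt_of_pow_lt_pow_left₀ (2 * p) hk'.le (by linarith)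
    refine ⟨by exact_mod_cast h1, ?_⟩
    have h3 : (Δn : ℝ) < 2 * k := by linarith
    exact_mod_cast h3
  · rintro ⟨h1, h2⟩
    have h1' : (k : ℝ) < Δn := by exact_mod_cast h1
    have h2' : (Δn : ℝ) < 2 * k := by exact_mod_cast h2
    have hlo : (1 / 2 : ℝ) ^ (2 * p) < ((k : ℝ) / Δn) ^ (2 * p) :=
      pow_lt_pow_left₀ (by rw [lt_div_iff₀ hd]; linarith) (by norm_num) h2p
    have hhi : ((k : ℝ) / Δn) ^ (2 * p) < 1 :=
      pow_lt_one₀ (by positivity) ((div_lt_one hd).2 h1') h2p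
    have hivt := intermediate_value_Ioo (show (1 / 2 : ℝ) ≤ 1 by norm_num)
      (f := fun a : ℝ => a ^ (2 * p + 1) + (1 - a) ^ (2 * p + 1)) (by fun_prop)
    obtain ⟨a, ⟨ha0, ha1⟩, ha⟩ := hivt (show ((k : ℝ) / Δn) ^ (2 * p) ∈ _ by
      refine ⟨?_, ?_⟩
      · have : (1 / 2 : ℝ) ^ (2 * p + 1) + (1 - 1 / 2) ^ (2 * p + 1) = (1 / 2) ^ (2 * p) := by
          rw [show (1 - 1 / 2 : ℝ) = 1 / 2 by norm_num, pow_succ]; ring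
        simpa only [this] using hlo
      · simpa using hhi)
    refine ⟨-(a * (1 - a)), by nlinarith, by nlinarith, ?_⟩
    rw [s_binet]
    simp only at ha
    rw [ha, div_pow, mul_div_cancel₀ _ hdp.ne']
    ring
end

section
/- Let p > q ≥ 1 be integers, let Δn ≥ 3 be an integer, and let β be a real number with 0 < β < β_0(Δn), where β_0(Δn) = ((Δn)^{2q} - 1)/((Δn)^{2p} - 1). Define R(γ) = β((Δn)^{2p} s_{2p+1}(γ) - 1) - ((Δn)^{2q} s_{2q+1}(γ) - 1). Then R(γ) < 0 for all γ ∈ [-1/4, 0] (in particular R has no root in [-1/4, 0)), and there exists γ₀ > 0 with R(γ₀) = 0. -/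
lemma s_continuous (m : ℕ) : Continuous (s m) := by
  induction m using Nat.twoStepInduction with
  | zero => exact (continuous_const (y := (2 : ℝ))).congr fun x => by simp [s]
  | one => exact (continuous_const (y := (1 : ℝ))).congr fun x => by simp [s]
  | more m h1 h2 =>
    have h : Continuous fun γ => s (m + 1) γ + γ * s m γ := h2.add (continuous_id.mul h1)
    exact h.congr fun x => by rw [s]

lemma one_le_s {γ : ℝ} (hγ : 0 ≤ γ) (m : ℕ) : 1 ≤ s m γ := by
  induction m using Nat.twoStepInduction with
  | zero => norm_num [s]
  | one => simp [s]
  | more m h1 h2 =>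
    rw [s]
    nlinarith [mul_nonneg hγ (zero_le_one.trans h1)]

/-- For `γ ≥ 1` the odd-indexed values grow at least by a factor `γ` from `q` to any `p > q`. -/
lemma s_growth {γ : ℝ} (hγ : 1 ≤ γ) {q p : ℕ} (h : q < p) :
    γ * s (2 * q + 1) γ ≤ s (2 * p + 1) γ := by
  have step (m : ℕ) : γ * s (2 * m + 1) γ ≤ s (2 * (m + 1) + 1) γ := by
    have h2 := one_le_s (zero_le_one.trans hγ) (2 * m + 2)
    rw [show 2 * (m + 1) + 1 = (2 * m + 1) + 2 by ring, s]
    linarith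
  induction p, h using Nat.le_induction with
  | base => exact step q
  | succ n _ ih =>
    have h2 := one_le_s (zero_le_one.trans hγ) (2 * n + 1)
    nlinarith [step n]

/-- If the drops of `S` decay no faster than the geometric rate `c`, then `S` compares with
`c ^ m` in the sense that `(1 - S m) / (1 - c ^ m)` is monotone.  At `m = 0` the quotient is `0 / 0`,
whose value `0` keeps the statement true. -/
lemma ratio_monotone {S : ℕ → ℝ} {c : ℝ} (hc0 : 0 < c) (hc1 : c < 1) (hS0 : S 0 = 1)
    (hD0 : ∀ m, 0 ≤ S m - S (m + 1))
    (hD : ∀ m, c * (S m - S (m + 1)) ≤ S (m + 1) - S (m + 2)) :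
    Monotone fun m => (1 - S m) / (1 - c ^ m) := by
  -- the ratio of partial sums up to `m` is at most the next term ratio
  have key (m : ℕ) : (1 - S m) * (c ^ m * (1 - c)) ≤ (S m - S (m + 1)) * (1 - c ^ m) := by
    induction m with
    | zero => simp [hS0]
    | succ m ih =>
      have h1 : 0 ≤ 1 - c ^ (m + 1) := sub_nonneg.2 (pow_le_one₀ hc0.le hc1.le)
      have h2 := mul_le_mul_of_nonneg_right (hD m) h1
      have h3 := mul_le_mul_of_nonneg_left ih hc0.le
      rw [pow_succ] at *
      linarith
  apply monotone_nat_of_le_succ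
  intro m
  have hpos (k : ℕ) : 0 < 1 - c ^ (k + 1) :=
    sub_pos.2 (pow_lt_one₀ hc0.le hc1 (Nat.succ_ne_zero k))
  rcases m with _ | m
  · have := hD0 0
    rw [hS0] at this
    simpa [hS0] using div_nonneg this (hpos 0).le
  · show _ / _ ≤ _ / _
    rw [div_le_div_iff₀ (hpos _) (hpos _)]
    have := key (m + 1)
    rw [pow_succ c (m + 1)]
    linarith

/-- Factored form of the drop of `a ^ (2m+1) + (1-a) ^ (2m+1)` from `m` to `m + 1`. -/
lemma drop_eq (a : ℝ) (m : ℕ) :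
    (a ^ (2 * m + 1) + (1 - a) ^ (2 * m + 1)) - (a ^ (2 * (m + 1) + 1) + (1 - a) ^ (2 * (m + 1) + 1))
      = a * (1 - a) * (a ^ (2 * m) * (1 + a) + (1 - a) ^ (2 * m) * (2 - a)) := by
  ring

lemma drop_ratio {a c : ℝ} (ha : 1 / 2 ≤ a) (ha1 : a ≤ 1) (hc : c ≤ 1 / 9) (m : ℕ) :
    c * (a ^ (2 * m) * (1 + a) + (1 - a) ^ (2 * m) * (2 - a)) ≤
      a ^ (2 * (m + 1)) * (1 + a) + (1 - a) ^ (2 * (m + 1)) * (2 - a) := by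
  have hb : 0 ≤ (1 - a) ^ (2 * m) := pow_nonneg (by linarith) _
  have hab : (1 - a) ^ (2 * m) ≤ a ^ (2 * m) := pow_le_pow_left₀ (by linarith) (by linarith) _
  have e1 : a ^ (2 * (m + 1)) = a ^ (2 * m) * a ^ 2 := by ring
  have e2 : (1 - a) ^ (2 * (m + 1)) = (1 - a) ^ (2 * m) * (1 - a) ^ 2 := by ring
  rw [e1, e2]
  generalize (1 - a) ^ (2 * m) = v at *
  generalize a ^ (2 * m) = u at *
  have hu : 0 ≤ u := hb.trans hab
  have h1 : 0 ≤ u * (1 + a) := mul_nonneg hu (by linarith)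
  have h2 : 0 ≤ v * (2 - a) := mul_nonneg hb (by linarith)
  have h3 : v * (2 - a) ≤ u * (1 + a) :=
    mul_le_mul hab (by linarith) (by linarith) hu
  have h4 : c * (u * (1 + a) + v * (2 - a)) ≤ 1 / 9 * (u * (1 + a) + v * (2 - a)) :=
    mul_le_mul_of_nonneg_right hc (by linarith)
  -- `a² + (1-a)² ≥ 1/2`, so the surplus of the larger term covers any deficit of the smaller
  have h5 : 0 ≤ (u * (1 + a) - v * (2 - a)) * (a ^ 2 - 1 / 9) :=
    mul_nonneg (by linarith) (by nlinarith)
  have h6 : 0 ≤ v * (2 - a) * (a ^ 2 + (1 - a) ^ 2 - 2 / 9) :=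
    mul_nonneg h2 (by nlinarith [sq_nonneg (2 * a - 1)])
  nlinarith

/-- The term `(N a) ^ (2p) * a ≥ (3/2)^4 / 2` alone already exceeds `1`. -/
lemma one_lt_scaled {a N : ℝ} (ha : 1 / 2 ≤ a) (ha1 : a ≤ 1) (hN : 3 ≤ N) {p : ℕ} (hp : 2 ≤ p) :
    1 < N ^ (2 * p) * (a ^ (2 * p + 1) + (1 - a) ^ (2 * p + 1)) := by
  have hb : 0 ≤ (1 - a) ^ (2 * p + 1) := pow_nonneg (by linarith) _
  have h1 : (3 / 2 : ℝ) ^ (2 * p) ≤ (N * a) ^ (2 * p) :=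
    pow_le_pow_left₀ (by norm_num) (by nlinarith) _
  have h2 : (3 / 2 : ℝ) ^ 4 ≤ (3 / 2) ^ (2 * p) := pow_le_pow_right₀ (by norm_num) (by omega)
  have h3 : N ^ (2 * p) * a ^ (2 * p + 1) = (N * a) ^ (2 * p) * a := by
    rw [mul_pow]; ring
  have h4 : 0 ≤ N ^ (2 * p) * (1 - a) ^ (2 * p + 1) := by positivity
  norm_num at h2
  nlinarith

theorem stmt_8 (p q : ℕ) (hq : 1 ≤ q) (hpq : q < p) (Δn : ℕ) (hΔn : 3 ≤ Δn)
    (β : ℝ) (hβpos : 0 < β)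
    (hβ : β < ((Δn : ℝ) ^ (2 * q) - 1) / ((Δn : ℝ) ^ (2 * p) - 1))
    (R : ℝ → ℝ)
    (hR : ∀ γ, R γ = β * ((Δn : ℝ) ^ (2 * p) * s (2 * p + 1) γ - 1)
        - ((Δn : ℝ) ^ (2 * q) * s (2 * q + 1) γ - 1)) :
    (∀ γ ∈ Set.Icc (-1/4 : ℝ) 0, R γ < 0) ∧ ∃ γ₀ : ℝ, 0 < γ₀ ∧ R γ₀ = 0 := by
  have hN : (3 : ℝ) ≤ Δn := by exact_mod_cast hΔn
  generalize (Δn : ℝ) = N at *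
  have neg : ∀ γ ∈ Set.Icc (-1/4 : ℝ) 0, R γ < 0 := by
    rintro γ ⟨hγ1, hγ0⟩
    obtain ⟨a, ha, ha1, rfl⟩ : ∃ a : ℝ, 1 / 2 ≤ a ∧ a ≤ 1 ∧ γ = -(a * (1 - a)) := by
      have hs := Real.sq_sqrt (show 0 ≤ 1 + 4 * γ by linarith)
      have hs0 := Real.sqrt_nonneg (1 + 4 * γ)
      refine ⟨(1 + √(1 + 4 * γ)) / 2, by linarith, by nlinarith, by nlinarith⟩
    have hp1 := one_lt_scaled ha ha1 hN (show 2 ≤ p by omega)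
    rw [hR, s_binet, s_binet]
    set c : ℝ := (N ^ 2)⁻¹ with hc
    have hc0 : 0 < c := by positivity
    have hc9 : c ≤ 1 / 9 := by
      rw [hc, ← one_div]
      exact one_div_le_one_div_of_le (by norm_num) (by nlinarith)
    have hw : 0 ≤ a * (1 - a) := mul_nonneg (by linarith) (by linarith)
    have mono := ratio_monotone (S := fun m => a ^ (2 * m + 1) + (1 - a) ^ (2 * m + 1)) hc0
      (by linarith) (by simp)
      (fun m => by
        rw [drop_eq]
        have h1 : 0 ≤ a := by linarith
        have h2 : 0 ≤ 1 - a := by linarith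
        have h3 : 0 ≤ 2 - a := by linarith
        positivity)
      (fun m => by
        have h := mul_le_mul_of_nonneg_left (drop_ratio ha ha1 hc9 m) hw
        have e := drop_eq a (m + 1)
        simp only [drop_eq, e]
        linarith)
    have hcmp := mono hpq.le
    simp only at hcmp
    set Sp := a ^ (2 * p + 1) + (1 - a) ^ (2 * p + 1)
    set Sq := a ^ (2 * q + 1) + (1 - a) ^ (2 * q + 1)
    have hX : 1 < N ^ (2 * q) := one_lt_pow₀ (by linarith) (by omega)
    have hY : 1 < N ^ (2 * p) := one_lt_pow₀ (by linarith) (by omega)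
    have ecq : c ^ q = (N ^ (2 * q))⁻¹ := by rw [hc, inv_pow, pow_mul]
    have ecp : c ^ p = (N ^ (2 * p))⁻¹ := by rw [hc, inv_pow, pow_mul]
    rw [ecq, ecp] at hcmp
    generalize N ^ (2 * q) = X at *
    generalize N ^ (2 * p) = Y at *
    have hX0 : 0 < X := by linarith
    have hY0 : 0 < Y := by linarith
    rw [div_le_div_iff₀ (sub_pos.2 (inv_lt_one_of_one_lt₀ hX))
      (sub_pos.2 (inv_lt_one_of_one_lt₀ hY))] at hcmp
    have hcross : (1 - Sq) * (X * (Y - 1)) ≤ (1 - Sp) * (Y * (X - 1)) := by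
      have h := mul_le_mul_of_nonneg_right hcmp (mul_pos hX0 hY0).le
      have e1 : (1 - Sq) * (1 - Y⁻¹) * (X * Y) = (1 - Sq) * (X * (Y - 1)) := by field_simp
      have e2 : (1 - Sp) * (1 - X⁻¹) * (X * Y) = (1 - Sp) * (Y * (X - 1)) := by field_simp
      rwa [e1, e2] at h
    rw [lt_div_iff₀ (sub_pos.2 hY)] at hβ
    have h1 : β * (Y - 1) * (Y * Sp - 1) < (X - 1) * (Y * Sp - 1) :=
      mul_lt_mul_of_pos_right hβ (by linarith)
    have h2 : (β * (Y * Sp - 1)) * (Y - 1) < (X * Sq - 1) * (Y - 1) := by linarith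
    have h3 := lt_of_mul_lt_mul_right h2 (by linarith)
    linarith
  refine ⟨neg, ?_⟩
  have hR0 : R 0 < 0 := neg 0 ⟨by norm_num, le_rfl⟩
  have hcont : Continuous R := by
    rw [funext hR]
    have := s_continuous (2 * p + 1)
    have := s_continuous (2 * q + 1)
    fun_prop
  have hX : 0 < N ^ (2 * q) := by positivity
  have hY : 0 < N ^ (2 * p) := by positivity
  -- `g ≥ 1` is chosen so that `β N^(2p) g ≥ N^(2q) + β`
  obtain ⟨g, hg1, hg⟩ : ∃ g : ℝ, 1 ≤ g ∧ N ^ (2 * q) + β ≤ β * N ^ (2 * p) * g := by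
    refine ⟨1 + (N ^ (2 * q) + β) / (β * N ^ (2 * p)), ?_, ?_⟩
    · have : 0 ≤ (N ^ (2 * q) + β) / (β * N ^ (2 * p)) := by positivity
      linarith
    · rw [mul_add, mul_div_cancel₀ _ (by positivity)]
      have : 0 < β * N ^ (2 * p) := by positivity
      linarith
  have hRg : 0 < R g := by
    have hS := one_le_s (zero_le_one.trans hg1) (2 * q + 1)
    have h1 := mul_le_mul_of_nonneg_left (s_growth hg1 hpq) (mul_pos hβpos hY).le
    have h2 := mul_le_mul_of_nonneg_right hg (zero_le_one.trans hS)
    have h3 := mul_le_mul_of_nonneg_left hS hβpos.le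
    rw [hR]
    linarith
  obtain ⟨x, hx, hx0⟩ := intermediate_value_Ioo (zero_le_one.trans hg1) hcont.continuousOn
    (show (0 : ℝ) ∈ Set.Ioo (R 0) (R g) from ⟨hR0, hRg⟩)
  exact ⟨x, hx.1, hx0⟩
end

section
/- Let p > q ≥ 1 be integers, let Δn ≥ 3 be an integer, and let β be a real number with β > β_{-1/4}(Δn), where β_{-1/4}(Δn) = ((Δn/2)^{2q} - 1)/((Δn/2)^{2p} - 1). Define R(γ) = β((Δn)^{2p} s_{2p+1}(γ) - 1) - ((Δn)^{2q} s_{2q+1}(γ) - 1). Then R(γ) > 0 for all γ ≥ -1/4; in particular R has no root in [-1/4, ∞). -/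
/-- A convex sequence vanishing at `0` has nondecreasing slopes `f k / k`. -/
lemma convex_seq_slope (f : ℕ → ℝ) (h0 : f 0 = 0)
    (hc : ∀ k, 2 * f (k + 1) ≤ f (k + 2) + f k) (q p : ℕ) (hq : 1 ≤ q) (hqp : q ≤ p) :
    (p : ℝ) * f q ≤ q * f p := by
  have step : ∀ k : ℕ, ((k : ℝ) + 1) * f k ≤ k * f (k + 1) := by
    intro k
    induction k with
    | zero => simp [h0]
    | succ k ih =>
      have := mul_le_mul_of_nonneg_left (hc k) (by positivity : (0 : ℝ) ≤ k + 1)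
      push_cast
      linarith
  induction p, hqp using Nat.le_induction with
  | base => exact le_rfl
  | succ p hp ih =>
    have hp0 : (0 : ℝ) < p := by exact_mod_cast (by omega : 0 < p)
    have h1 := mul_le_mul_of_nonneg_left (step p) (Nat.cast_nonneg q : (0 : ℝ) ≤ q)
    have h2 := mul_le_mul_of_nonneg_left ih (by positivity : (0 : ℝ) ≤ p + 1)
    refine le_of_mul_le_mul_left ?_ hp0
    push_cast
    linarith

/-- The odd part `O` of `(1 + x) ^ (2 * k + 1) = E + x * O`, `x ^ 2 = 1 + 4γ`, is nonnegative;
the even part `E = 4 ^ k * s (2 * k + 1) γ` is at least `1`, and `E + x ^ 2 * O` is the even part of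
`(1 + x) ^ (2 * k + 2)`. -/
lemma exists_odd_part (γ : ℝ) (hγ : -1/4 ≤ γ) (k : ℕ) :
    1 ≤ 4 ^ k * s (2 * k + 1) γ ∧ ∃ O : ℝ, 0 ≤ O ∧
      2 * (4 ^ k * s (2 * k + 2) γ) = 4 ^ k * s (2 * k + 1) γ + (1 + 4 * γ) * O := by
  have ht : 0 ≤ 1 + 4 * γ := by linarith
  induction k with
  | zero => exact ⟨by simp [s], 1, by norm_num, by simp [s]; ring⟩
  | succ k ih =>
    obtain ⟨hE, O, hO, h⟩ := ih
    have e3 : s (2 * (k + 1) + 1) γ = s (2 * k + 2) γ + γ * s (2 * k + 1) γ := rfl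
    have e4 : s (2 * (k + 1) + 2) γ = s (2 * (k + 1) + 1) γ + γ * s (2 * k + 2) γ := rfl
    rw [e4, e3, pow_succ]
    set a := s (2 * k + 1) γ
    set b := s (2 * k + 2) γ
    have htE := mul_nonneg ht (zero_le_one.trans hE)
    have htO := mul_nonneg ht hO
    refine ⟨by linarith, 2 * (4 ^ k * a) + (1 + 4 * γ) * O + O, by linarith, ?_⟩
    linear_combination (2 + 4 * γ) * h

/-- The sequence `k ↦ 4 ^ k * s (2 * k + 1) γ` is convex. -/
lemma scaled_s_convex (γ : ℝ) (hγ : -1/4 ≤ γ) (k : ℕ) :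
    2 * (4 ^ (k + 1) * s (2 * (k + 1) + 1) γ) ≤
      4 ^ (k + 2) * s (2 * (k + 2) + 1) γ + 4 ^ k * s (2 * k + 1) γ := by
  have ht : 0 ≤ 1 + 4 * γ := by linarith
  obtain ⟨hE, O, hO, h⟩ := exists_odd_part γ hγ k
  have e3 : s (2 * (k + 1) + 1) γ = s (2 * k + 2) γ + γ * s (2 * k + 1) γ := rfl
  have e5 : s (2 * (k + 2) + 1) γ =
      (s (2 * (k + 1) + 1) γ + γ * s (2 * k + 2) γ) + γ * s (2 * (k + 1) + 1) γ := rfl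
  rw [e5, e3, pow_succ, pow_add]
  set a := s (2 * k + 1) γ
  set b := s (2 * k + 2) γ
  have hE0 : 0 ≤ 4 ^ k * a := zero_le_one.trans hE
  -- With `t = 1 + 4γ`, the second difference is `t * (t * (E + 2 * O) + 2 * (2 * E + t * O))`.
  have key : 0 ≤ (1 + 4 * γ) * ((1 + 4 * γ) * (4 ^ k * a + 2 * O)
      + 2 * (2 * (4 ^ k * a) + (1 + 4 * γ) * O)) := by positivity
  have id : 4 ^ k * 4 ^ 2 * (b + γ * a + γ * b + γ * (b + γ * a)) + 4 ^ k * a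
      - 2 * (4 ^ k * 4 * (b + γ * a)) = (1 + 4 * γ) * ((1 + 4 * γ) * (4 ^ k * a + 2 * O)
      + 2 * (2 * (4 ^ k * a) + (1 + 4 * γ) * O)) := by
    linear_combination (4 * (1 + 4 * γ)) * h
  linarith

theorem stmt_10 (p q : ℕ) (hq : 1 ≤ q) (hpq : q < p) (Δn : ℕ) (hΔn : 3 ≤ Δn)
    (β : ℝ)
    (hβ : (((Δn : ℝ) / 2) ^ (2 * q) - 1) / (((Δn : ℝ) / 2) ^ (2 * p) - 1) < β)
    (R : ℝ → ℝ)
    (hR : ∀ γ, R γ = β * ((Δn : ℝ) ^ (2 * p) * s (2 * p + 1) γ - 1)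
        - ((Δn : ℝ) ^ (2 * q) * s (2 * q + 1) γ - 1)) :
    ∀ γ : ℝ, -1/4 ≤ γ → 0 < R γ := by
  intro γ hγ
  rw [hR]
  have hN : (1 : ℝ) < (Δn : ℝ) / 2 := by
    have : (3 : ℝ) ≤ Δn := by exact_mod_cast hΔn
    linarith
  have hD : ∀ k, (Δn : ℝ) ^ (2 * k) * s (2 * k + 1) γ
      = (((Δn : ℝ) / 2) ^ 2) ^ k * (4 ^ k * s (2 * k + 1) γ) := by
    intro k
    rw [← mul_assoc, ← mul_pow, pow_mul]
    congr 2
    ring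
  rw [hD, hD]
  rw [pow_mul, pow_mul] at hβ
  have hB : 1 < ((Δn : ℝ) / 2) ^ 2 := one_lt_pow₀ hN two_ne_zero
  have hgp := (exists_odd_part γ hγ p).1
  have hgq := (exists_odd_part γ hγ q).1
  have hg := convex_seq_slope (fun k => 4 ^ k * s (2 * k + 1) γ - 1) (by simp [s])
    (fun k => by have := scaled_s_convex γ hγ k; linarith) q p hq hpq.le
  generalize ((Δn : ℝ) / 2) ^ 2 = B at *
  have hB0 : 0 < B := by linarith
  have hr := convex_seq_slope (fun k => B⁻¹ ^ k - 1) (by simp)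
    (fun k => by
      have : 0 ≤ B⁻¹ ^ k * (B⁻¹ - 1) ^ 2 := by positivity
      rw [pow_add _ _ 2, pow_succ]
      linarith) q p hq hpq.le
  generalize 4 ^ p * s (2 * p + 1) γ = gp at *
  generalize 4 ^ q * s (2 * q + 1) γ = gq at *
  have hq0 : (0 : ℝ) < q := by exact_mod_cast hq
  have hp0 : (0 : ℝ) < p := by exact_mod_cast (by omega : 0 < p)
  have hBp : 1 < B ^ p := one_lt_pow₀ hB (by omega)
  have hBq : 1 < B ^ q := one_lt_pow₀ hB (by omega)
  rw [inv_pow, inv_pow] at hr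
  generalize B ^ p = P at *
  generalize B ^ q = Q at *
  have hP0 : 0 < P := by linarith
  have hQ0 : 0 < Q := by linarith
  have hPi : P⁻¹ ≤ 1 := inv_le_one_of_one_le₀ hBp.le
  have hprod : (gq - 1) * (1 - P⁻¹) ≤ (gp - 1) * (1 - Q⁻¹) := by
    have h := mul_le_mul hg (show (q : ℝ) * (1 - P⁻¹) ≤ p * (1 - Q⁻¹) by linarith)
      (mul_nonneg hq0.le (by linarith)) (mul_nonneg hq0.le (by linarith))
    refine le_of_mul_le_mul_left ?_ (mul_pos hp0 hq0)
    linarith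
  have hcross : (Q * gq - 1) * (P - 1) ≤ (Q - 1) * (P * gp - 1) := by
    have h := mul_le_mul_of_nonneg_left hprod (mul_pos hP0 hQ0).le
    have e1 : P * Q * ((gq - 1) * (1 - P⁻¹)) = Q * (gq - 1) * (P - 1) := by
      field_simp
    have e2 : P * Q * ((gp - 1) * (1 - Q⁻¹)) = P * (gp - 1) * (Q - 1) := by
      field_simp
    rw [e1, e2] at h
    linarith
  have hPg : 0 < P * gp - 1 := by
    have := mul_le_mul_of_nonneg_left hgp hP0.le
    linarith
  have hP1 : 0 < P - 1 := by linarith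
  have hlt := mul_lt_mul_of_pos_right ((div_lt_iff₀ hP1).1 hβ) hPg
  refine pos_of_mul_pos_left (b := P - 1) ?_ hP1.le
  linarith
end

section
/- For all integers p > q ≥ 1, (2q+1)/(2p+1) < (1 - 2^{-2q})/(1 - 2^{-2p}). -/
/-!
The claim says that `n ↦ (1 - 4⁻ⁿ) / (2 n + 1)` is strictly decreasing for `n ≥ 1`. After clearing
denominators, the comparison of consecutive terms reduces to `6 n + 11 < 8 * 4 ^ n`
(`six_mul_add_lt`).
-/

lemma six_mul_add_lt (n : ℕ) (hn : 1 ≤ n) : (6 * n + 11 : ℝ) < 8 * 4 ^ n := by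
  induction n, hn using Nat.le_induction with
  | base => norm_num
  | succ k hk ih =>
    rw [pow_succ]
    push_cast
    have : (0 : ℝ) ≤ k := k.cast_nonneg
    linarith

lemma ratio_succ_lt (n : ℕ) (hn : 1 ≤ n) :
    (1 - ((4 : ℝ) ^ (n + 1))⁻¹) / (2 * (n + 1 : ℕ) + 1) < (1 - ((4 : ℝ) ^ n)⁻¹) / (2 * n + 1) := by
  have h := six_mul_add_lt n hn
  have hx : (0 : ℝ) < ((4 : ℝ) ^ n)⁻¹ := by positivity
  have hmul : ((4 : ℝ) ^ n)⁻¹ * 4 ^ n = 1 := inv_mul_cancel₀ (by positivity)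
  have h' := mul_lt_mul_of_pos_left h hx
  rw [div_lt_div_iff₀ (by positivity) (by positivity), pow_succ, mul_inv]
  push_cast
  linarith

lemma ratio_lt (p q : ℕ) (hq : 1 ≤ q) (hpq : q < p) :
    (1 - ((4 : ℝ) ^ p)⁻¹) / (2 * p + 1) < (1 - ((4 : ℝ) ^ q)⁻¹) / (2 * q + 1) := by
  induction p, hpq using Nat.le_induction with
  | base => exact ratio_succ_lt q hq
  | succ k hk ih => exact (ratio_succ_lt k (by omega)).trans ih

theorem stmt_11 (p q : ℕ) (hq : 1 ≤ q) (hpq : q < p) :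
    ((2 * q + 1 : ℝ)) / (2 * p + 1)
      < (1 - (2 : ℝ) ^ (-(2 * (q : ℤ)))) / (1 - (2 : ℝ) ^ (-(2 * (p : ℤ)))) := by
  have key (n : ℕ) : (2 : ℝ) ^ (-(2 * (n : ℤ))) = ((4 : ℝ) ^ n)⁻¹ := by
    rw [zpow_neg, zpow_mul, zpow_natCast]
    norm_num
  rw [key, key]
  have h := ratio_lt p q hq hpq
  have hp : ((4 : ℝ) ^ p)⁻¹ < 1 :=
    inv_lt_one_of_one_lt₀ (one_lt_pow₀ (by norm_num) (by omega))
  rw [div_lt_div_iff₀ (by positivity) (by positivity)] at h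
  rw [div_lt_div_iff₀ (by positivity) (by linarith)]
  linarith
end

section
/- Let p > q ≥ 1 be integers and define R(γ) = β(2^{2p} s_{2p+1}(γ) - 1) - (2^{2q} s_{2q+1}(γ) - 1), β_0 = (2^{2q} - 1)/(2^{2p} - 1), β_{-1/4} = (2q(2q+1))/(2p(2p+1)). Then: (i) if 0 < β < β_0, then R(γ) < 0 for all γ ∈ (-1/4, 0] and there exists γ₀ > 0 with R(γ₀) = 0; (ii) if β_0 < β < β_{-1/4}, then there exists γ ∈ (-1/4, 0) with R(γ) = 0; (iii) if β > β_{-1/4}, then R(γ) > 0 for all γ > -1/4. -/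
/-- The polynomial `((1 + x) ^ (2n+1) + (1 - x) ^ (2n+1) - 2) / (2 x²)` in the variable `y = x²`.
The number of terms `N` is a parameter, so that two values of `n` can share an index set; all
`N ≥ n` give the same polynomial. -/
noncomputable def E (N n : ℕ) (y : ℝ) : ℝ :=
  ∑ k ∈ Finset.range N, ((2 * n + 1).choose (2 * k + 2) : ℝ) * y ^ k

lemma two_pow_mul_s (γ x : ℝ) (hx : x ^ 2 = 1 + 4 * γ) (m : ℕ) :
    2 ^ m * s m γ = (1 + x) ^ m + (1 - x) ^ m := by
  induction m using Nat.twoStepInduction with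
  | zero => simp [s]; norm_num
  | one => simp [s]; norm_num
  | more m h0 h1 =>
    have hγ : γ = (x ^ 2 - 1) / 4 := by linarith
    have : 2 ^ (m + 2) * s (m + 2) γ
        = 2 * (2 ^ (m + 1) * s (m + 1) γ) + 4 * γ * (2 ^ m * s m γ) := by
      simp only [s]; ring
    rw [this, h0, h1, hγ]
    ring

lemma s_succ_zero (m : ℕ) : s (m + 1) 0 = 1 := by
  induction m with
  | zero => simp [s]
  | succ m ih => simp [s, ih]

lemma one_add_pow_extend (x : ℝ) (m M : ℕ) (h : m < M) :
    (1 + x) ^ m = ∑ i ∈ Finset.range M, (m.choose i : ℝ) * x ^ i := by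
  rw [add_comm, add_pow]
  have hsub : Finset.range (m + 1) ⊆ Finset.range M := Finset.range_mono h
  rw [← Finset.sum_subset hsub]
  · exact Finset.sum_congr rfl fun i _ => by simp [mul_comm]
  · intro i _ hi
    rw [Nat.choose_eq_zero_of_lt (by simpa using hi)]
    simp

lemma sum_range_two_mul (f : ℕ → ℝ) (M : ℕ) :
    ∑ i ∈ Finset.range (2 * M), f i = ∑ k ∈ Finset.range M, (f (2 * k) + f (2 * k + 1)) := by
  induction M with
  | zero => simp
  | succ M ih =>
    rw [Finset.sum_range_succ, ← ih, Nat.mul_succ, Finset.sum_range_succ, Finset.sum_range_succ,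
      add_assoc]

lemma s_eq_E (N n : ℕ) (hn : n ≤ N) (γ : ℝ) (hγ : 0 ≤ 1 + 4 * γ) :
    (2 : ℝ) ^ (2 * n) * s (2 * n + 1) γ - 1 = (1 + 4 * γ) * E N n (1 + 4 * γ) := by
  obtain ⟨x, hx⟩ : ∃ x : ℝ, x ^ 2 = 1 + 4 * γ := ⟨√(1 + 4 * γ), Real.sq_sqrt hγ⟩
  have h := two_pow_mul_s γ x hx (2 * n + 1)
  have h2 : (1 + x) ^ (2 * n + 1) + (1 - x) ^ (2 * n + 1)
      = 2 * ∑ k ∈ Finset.range (N + 1), ((2 * n + 1).choose (2 * k) : ℝ) * (x ^ 2) ^ k := by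
    rw [sub_eq_add_neg, one_add_pow_extend x _ (2 * (N + 1)) (by omega),
      one_add_pow_extend (-x) _ (2 * (N + 1)) (by omega), ← Finset.sum_add_distrib,
      sum_range_two_mul, Finset.mul_sum]
    refine Finset.sum_congr rfl fun k _ => ?_
    rw [pow_succ, pow_succ, pow_mul, pow_mul, neg_sq]
    ring
  have h3 : ∑ k ∈ Finset.range (N + 1), ((2 * n + 1).choose (2 * k) : ℝ) * (x ^ 2) ^ k
      = 1 + x ^ 2 * E N n (x ^ 2) := by
    rw [Finset.sum_range_succ', E, Finset.mul_sum, add_comm]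
    congr 1
    · simp
    · refine Finset.sum_congr rfl fun k _ => ?_
      rw [Nat.mul_succ]
      ring
  rw [h2, h3, pow_succ] at h
  rw [← hx]
  linarith

/-- The ratio `C(m, j) / C(n, j)` is nonincreasing in `j` when `m ≤ n`. -/
lemma choose_cross {m n i j : ℕ} (hmn : m ≤ n) (hij : i ≤ j) :
    m.choose j * n.choose i ≤ m.choose i * n.choose j := by
  rcases lt_or_ge m j with h | h
  · simp [Nat.choose_eq_zero_of_lt h]
  · have h1 := Nat.choose_mul (n := m) (k := j) (s := i) hij
    have h2 := Nat.choose_mul (n := n) (k := j) (s := i) hij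
    have h3 : (m - i).choose (j - i) ≤ (n - i).choose (j - i) :=
      Nat.choose_le_choose _ (by omega)
    refine Nat.le_of_mul_le_mul_right ?_ (Nat.choose_pos hij)
    calc m.choose j * n.choose i * j.choose i
        = (m.choose j * j.choose i) * n.choose i := by ring
      _ = (m.choose i * n.choose i) * (m - i).choose (j - i) := by rw [h1]; ring
      _ ≤ (m.choose i * n.choose i) * (n - i).choose (j - i) := Nat.mul_le_mul_left _ h3
      _ = m.choose i * (n.choose j * j.choose i) := by rw [h2]; ring
      _ = m.choose i * n.choose j * j.choose i := by ring

/-- Chebyshev's sum inequality: symmetrising the double sum of the difference gives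
`∑ (a k * b j - a j * b k) * (y ^ k - y ^ j)`, whose terms are all nonnegative. -/
lemma E_cross {N p q : ℕ} (hpq : q ≤ p) {y : ℝ} (h0 : 0 ≤ y) (h1 : y ≤ 1) :
    E N q 1 * E N p y ≤ E N q y * E N p 1 := by
  set a : ℕ → ℝ := fun k => ((2 * q + 1).choose (2 * k + 2) : ℝ) with ha
  set b : ℕ → ℝ := fun k => ((2 * p + 1).choose (2 * k + 2) : ℝ) with hb
  have hab : ∀ k j, k ≤ j → a j * b k ≤ a k * b j := fun k j hkj => by
    have := choose_cross (m := 2 * q + 1) (n := 2 * p + 1) (i := 2 * k + 2) (j := 2 * j + 2)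
      (by omega) (by omega)
    simp only [ha, hb]
    exact_mod_cast this
  have hterm : ∀ k j, 0 ≤ (a k * b j - a j * b k) * (y ^ k - y ^ j) := fun k j => by
    rcases le_total k j with h | h
    · exact mul_nonneg (sub_nonneg.2 (hab k j h)) (sub_nonneg.2 (pow_le_pow_of_le_one h0 h1 h))
    · exact mul_nonneg_of_nonpos_of_nonpos (sub_nonpos.2 (by linarith [hab j k h]))
        (sub_nonpos.2 (pow_le_pow_of_le_one h0 h1 h))
  have hsum : 0 ≤ ∑ k ∈ Finset.range N, ∑ j ∈ Finset.range N,
      (a k * b j - a j * b k) * (y ^ k - y ^ j) :=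
    Finset.sum_nonneg fun k _ => Finset.sum_nonneg fun j _ => hterm k j
  have hA : E N q y * E N p 1
      = ∑ k ∈ Finset.range N, ∑ j ∈ Finset.range N, a k * b j * y ^ k := by
    simp only [E, Finset.sum_mul_sum, one_pow]
    exact Finset.sum_congr rfl fun k _ => Finset.sum_congr rfl fun j _ => by simp only [ha, hb]; ring
  have hB : E N q 1 * E N p y
      = ∑ k ∈ Finset.range N, ∑ j ∈ Finset.range N, a k * b j * y ^ j := by
    simp only [E, Finset.sum_mul_sum, one_pow]
    exact Finset.sum_congr rfl fun k _ => Finset.sum_congr rfl fun j _ => by simp only [ha, hb]; ring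
  have hA' := hA
  rw [Finset.sum_comm] at hA'
  have hB' := hB
  rw [Finset.sum_comm] at hB'
  have : ∑ k ∈ Finset.range N, ∑ j ∈ Finset.range N, (a k * b j - a j * b k) * (y ^ k - y ^ j)
      = 2 * (E N q y * E N p 1 - E N q 1 * E N p y) := by
    have e : ∀ k j, (a k * b j - a j * b k) * (y ^ k - y ^ j)
        = a k * b j * y ^ k - a k * b j * y ^ j + a j * b k * y ^ j - a j * b k * y ^ k :=
      fun k j => by ring
    simp only [e, Finset.sum_add_distrib, Finset.sum_sub_distrib]
    rw [← hA, ← hB, ← hA', ← hB']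
    ring
  linarith

lemma E_one (N n : ℕ) (hn : n ≤ N) : E N n 1 = 2 ^ (2 * n) - 1 := by
  have := s_eq_E N n hn 0 (by norm_num)
  rw [s_succ_zero] at this
  simpa using this.symm

lemma E_zero (N n : ℕ) (hN : 0 < N) : E N n 0 = n * (2 * n + 1) := by
  obtain ⟨M, rfl⟩ := Nat.exists_eq_succ_of_ne_zero hN.ne'
  rw [E, Finset.sum_range_succ']
  simp only [pow_succ, mul_zero, Finset.sum_const_zero, zero_add, pow_zero, mul_one]
  rw [Nat.cast_choose_two]
  push_cast
  ring

lemma continuous_E (N n : ℕ) : Continuous (E N n) := by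
  unfold E
  fun_prop

lemma E_pos (n : ℕ) (hn : 1 ≤ n) (y : ℝ) (hy : 0 < y) : 0 < E n n y := by
  refine Finset.sum_pos (fun k hk => ?_) ⟨0, Finset.mem_range.2 hn⟩
  have hk' := Finset.mem_range.1 hk
  have : 0 < (2 * n + 1).choose (2 * k + 2) := Nat.choose_pos (by omega)
  positivity

lemma pow_le_E (n : ℕ) (hn : 1 ≤ n) (y : ℝ) (hy : 0 < y) : y ^ (n - 1) ≤ E n n y := by
  have h1 : ((2 * n + 1).choose (2 * (n - 1) + 2) : ℝ) * y ^ (n - 1) ≤ E n n y :=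
    Finset.single_le_sum (f := fun k => ((2 * n + 1).choose (2 * k + 2) : ℝ) * y ^ k)
      (fun k _ => by positivity) (Finset.mem_range.2 (by omega))
  have h2 : (1 : ℝ) ≤ ((2 * n + 1).choose (2 * (n - 1) + 2) : ℝ) := by
    exact_mod_cast Nat.choose_pos (by omega)
  have h3 : 0 < y ^ (n - 1) := by positivity
  nlinarith

lemma E_le (N n : ℕ) (y : ℝ) (hy : 1 ≤ y) : E N n y ≤ E N n 1 * y ^ (n - 1) := by
  rw [E, E, Finset.sum_mul]
  refine Finset.sum_le_sum fun k _ => ?_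
  rw [one_pow, mul_one]
  rcases lt_or_ge k n with h | h
  · exact mul_le_mul_of_nonneg_left (pow_le_pow_right₀ hy (by omega)) (by positivity)
  · rw [Nat.choose_eq_zero_of_lt (by omega)]
    simp

theorem stmt_13 (p q : ℕ) (hq : 1 ≤ q) (hpq : q < p) (β : ℝ)
    (R : ℝ → ℝ)
    (hR : ∀ γ, R γ = β * ((2 : ℝ) ^ (2 * p) * s (2 * p + 1) γ - 1)
        - ((2 : ℝ) ^ (2 * q) * s (2 * q + 1) γ - 1)) :
    ((0 < β ∧ β < ((2 : ℝ) ^ (2 * q) - 1) / ((2 : ℝ) ^ (2 * p) - 1)) →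
      (∀ γ : ℝ, -1/4 < γ → γ ≤ 0 → R γ < 0) ∧ ∃ γ₀ : ℝ, 0 < γ₀ ∧ R γ₀ = 0) ∧
    ((((2 : ℝ) ^ (2 * q) - 1) / ((2 : ℝ) ^ (2 * p) - 1) < β ∧
        β < (2 * q * (2 * q + 1) : ℝ) / (2 * p * (2 * p + 1))) →
      ∃ γ : ℝ, -1/4 < γ ∧ γ < 0 ∧ R γ = 0) ∧
    ((2 * q * (2 * q + 1) : ℝ) / (2 * p * (2 * p + 1)) < β →
      ∀ γ : ℝ, -1/4 < γ → 0 < R γ) := by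
  have hp : 1 ≤ p := by omega
  have hp0 : (0 : ℝ) < p := by exact_mod_cast hp
  have hfac : ∀ γ : ℝ, -1/4 < γ →
      R γ = (1 + 4 * γ) * (β * E p p (1 + 4 * γ) - E p q (1 + 4 * γ)) := fun γ hγ => by
    rw [hR, s_eq_E p p le_rfl γ (by linarith), s_eq_E p q hpq.le γ (by linarith)]
    ring
  have hcont : Continuous fun y => β * E p p y - E p q y :=
    (continuous_const.mul (continuous_E p p)).sub (continuous_E p q)
  have hP1 := E_pos p hp 1 one_pos
  have hzero : (2 * q * (2 * q + 1) : ℝ) / (2 * p * (2 * p + 1)) = E p q 0 / E p p 0 := by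
    rw [E_zero p q hp, E_zero p p hp]
    field_simp
  have hP0 : 0 < E p p 0 := by
    rw [E_zero p p hp]
    positivity
  rw [← E_one p p le_rfl, ← E_one p q hpq.le, hzero]
  refine ⟨fun ⟨hβ, hlt⟩ => ?_, fun ⟨hgt, hlt⟩ => ?_, fun hgt γ hγ => ?_⟩
  · rw [lt_div_iff₀ hP1] at hlt
    refine ⟨fun γ hγ hγ0 => ?_, ?_⟩
    · rw [hfac γ hγ]
      have hy : 0 < 1 + 4 * γ := by linarith
      have hc := E_cross (N := p) hpq.le hy.le (by linarith : 1 + 4 * γ ≤ 1)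
      have hPy := E_pos p hp _ hy
      refine mul_neg_of_pos_of_neg hy ?_
      by_contra! hcon
      nlinarith [mul_lt_mul_of_pos_right hlt hPy, mul_nonneg hcon hP1.le]
    · -- Beyond `y = 1 + E q 1 / β` the leading term of `β * E p` dominates all of `E q`.
      have hQ1 : 0 ≤ E p q 1 := by
        unfold E
        positivity
      set Y : ℝ := 1 + E p q 1 / β with hY
      have hdiv : 0 ≤ E p q 1 / β := by positivity
      have hY1 : 1 ≤ Y := by linarith
      have hβY : E p q 1 ≤ β * Y := by
        rw [hY, mul_add, mul_div_cancel₀ _ hβ.ne']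
        linarith
      have hbig : 0 ≤ β * E p p Y - E p q Y := by
        have h1 := pow_le_E p hp Y (by linarith)
        have h2 := E_le p q Y hY1
        have h3 : Y ^ q ≤ Y ^ (p - 1) := pow_le_pow_right₀ hY1 (by omega)
        have h4 : Y ^ q = Y * Y ^ (q - 1) := by
          rw [← pow_succ', Nat.sub_add_cancel hq]
        have h5 : 0 ≤ Y ^ (q - 1) := by positivity
        have h6 := mul_le_mul_of_nonneg_left (h3.trans h1) hβ.le
        have h7 := mul_le_mul_of_nonneg_right hβY h5
        rw [h4] at h6
        nlinarith
      obtain ⟨y, ⟨hy1, -⟩, hy⟩ := intermediate_value_Ioc hY1 hcont.continuousOn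
        (show (0 : ℝ) ∈ Set.Ioc _ _ from ⟨by linarith, hbig⟩)
      refine ⟨(y - 1) / 4, by linarith, ?_⟩
      rw [hfac _ (by linarith), show 1 + 4 * ((y - 1) / 4) = y by ring]
      simp only at hy
      rw [hy, mul_zero]
  · rw [div_lt_iff₀ hP1] at hgt
    rw [lt_div_iff₀ hP0] at hlt
    obtain ⟨y, ⟨hy0, hy1⟩, hy⟩ := intermediate_value_Ioo zero_le_one hcont.continuousOn
      (show (0 : ℝ) ∈ Set.Ioo _ _ from ⟨by linarith, by linarith⟩)
    refine ⟨(y - 1) / 4, by linarith, by linarith, ?_⟩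
    rw [hfac _ (by linarith), show 1 + 4 * ((y - 1) / 4) = y by ring]
    simp only at hy
    rw [hy, mul_zero]
  · rw [hfac γ hγ]
    have hy : 0 < 1 + 4 * γ := by linarith
    refine mul_pos hy (sub_pos.2 ?_)
    rw [div_lt_iff₀ hP0] at hgt
    -- The values at `y = 0` are the lowest coefficients.
    have hcoef : ∀ n, E p n 0 = ((2 * n + 1).choose 2 : ℝ) := fun n => by
      rw [E_zero p n hp, Nat.cast_choose_two]
      push_cast
      ring
    rw [E, E, Finset.mul_sum]
    refine Finset.sum_lt_sum_of_nonempty ⟨0, Finset.mem_range.2 hp⟩ fun k hk => ?_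
    have hk' := Finset.mem_range.1 hk
    have hb : (0 : ℝ) < ((2 * p + 1).choose (2 * k + 2) : ℝ) := by
      exact_mod_cast Nat.choose_pos (by omega)
    have hc : ((2 * q + 1).choose (2 * k + 2) : ℝ) * ((2 * p + 1).choose 2 : ℝ)
        ≤ ((2 * q + 1).choose 2 : ℝ) * ((2 * p + 1).choose (2 * k + 2) : ℝ) := by
      exact_mod_cast choose_cross (by omega) (by omega)
    rw [← hcoef, ← hcoef] at hc
    rw [← mul_assoc]
    refine mul_lt_mul_of_pos_right ?_ (by positivity)
    by_contra! hcon
    nlinarith [mul_lt_mul_of_pos_right hgt hb, mul_le_mul_of_nonneg_right hcon hP0.le]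
end

section
/- Let a > b > 0 be real numbers and define f(n) = (n^{a-b} - 1)/(n^a - 1) for n > 1. Then f is strictly decreasing on (1, ∞), and f(n) < (a-b)/a for every n > 1 (so f, extended by f(1) = (a-b)/a, is decreasing on [1, ∞)). -/
/-!
Put `p = (a - b) / a ∈ (0, 1)` and `m = n ^ a`, so that `f n = (m ^ p - 1) / (m - 1)` is the slope
of the secant of `x ↦ x ^ p` through `1` and `m`. Since this function is strictly concave, the slope
is strictly decreasing in `m`, hence in `n`; Bernoulli's inequality `m ^ p < 1 + p * (m - 1)` bounds
it by `p`.
-/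

theorem stmt_14 (a b : ℝ) (hb : 0 < b) (hab : b < a)
    (f : ℝ → ℝ)
    (hf : ∀ n : ℝ, f n = (n ^ (a - b) - 1) / (n ^ a - 1)) :
    StrictAntiOn f (Set.Ioi (1 : ℝ)) ∧ ∀ n : ℝ, 1 < n → f n < (a - b) / a := by
  have ha : 0 < a := hb.trans hab
  have hp0 : 0 < (a - b) / a := div_pos (sub_pos.2 hab) ha
  have hp1 : (a - b) / a < 1 := by rw [div_lt_one ha]; linarith
  have hpow : ∀ n : ℝ, 1 < n → n ^ (a - b) = (n ^ a) ^ ((a - b) / a) := by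
    intro n hn
    rw [← Real.rpow_mul (by linarith), mul_div_cancel₀ _ ha.ne']
  have hone : ∀ n : ℝ, 1 < n → 1 < n ^ a := fun n hn => Real.one_lt_rpow hn ha
  constructor
  · intro x hx y hy hxy
    have hx1 := hone x hx
    have hy1 := hone y hy
    have hlt : x ^ a < y ^ a :=
      Real.rpow_lt_rpow (zero_le_one.trans (le_of_lt hx)) hxy ha
    have key := (Real.strictConcaveOn_rpow hp0 hp1).secant_strict_mono
      (a := 1) (x := x ^ a) (y := y ^ a) (Set.mem_Ici.2 zero_le_one)
      (Set.mem_Ici.2 (by linarith)) (Set.mem_Ici.2 (by linarith)) hx1.ne' hy1.ne' hlt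
    rw [hf, hf, hpow x hx, hpow y hy]
    simpa only [Real.one_rpow] using key
  · intro n hn
    have hn1 := hone n hn
    have key := rpow_one_add_lt_one_add_mul_self (s := n ^ a - 1) (by linarith)
      (by linarith) hp0 hp1
    rw [add_sub_cancel] at key
    rw [hf, hpow n hn, div_lt_iff₀ (by linarith)]
    linarith
end

section
/- For every real γ ≥ -1/4: (a) s_m(γ) ≥ 2^{-(m-1)} for every integer m ≥ 0; (b) if moreover -1/4 ≤ γ < 0, then s_m(γ) < 1 for every integer m ≥ 2; (c) if γ > 0, then s_m(γ) > 1 for every integer m ≥ 2. -/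
lemma s_pos_and_half_le (γ : ℝ) (hγ : -1/4 ≤ γ) (m : ℕ) :
    0 < s m γ ∧ s m γ / 2 ≤ s (m + 1) γ := by
  induction m with
  | zero => norm_num [s]
  | succ k ih =>
    obtain ⟨hpos, hhalf⟩ := ih
    refine ⟨by linarith, ?_⟩
    have hrec : s (k + 1 + 1) γ = s (k + 1) γ + γ * s k γ := by rw [s]
    have hmul : -1/4 * s k γ ≤ γ * s k γ := mul_le_mul_of_nonneg_right hγ hpos.le
    linarith

theorem stmt_15 (γ : ℝ) (hγ : -1/4 ≤ γ) :
    (∀ m : ℕ, s m γ ≥ (2 : ℝ) ^ (-((m : ℤ) - 1))) ∧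
    (γ < 0 → ∀ m : ℕ, 2 ≤ m → s m γ < 1) ∧
    (0 < γ → ∀ m : ℕ, 2 ≤ m → 1 < s m γ) := by
  have hs := s_pos_and_half_le γ hγ
  refine ⟨fun m => ?_, fun hneg m hm => ?_, fun hpos m hm => ?_⟩
  · induction m with
    | zero => norm_num [s]
    | succ k ih =>
      have hexp : (2 : ℝ) ^ (-(((k + 1 : ℕ) : ℤ) - 1)) = (2 : ℝ) ^ (-((k : ℤ) - 1)) / 2 := by
        rw [div_eq_mul_inv, ← zpow_sub_one₀ (two_ne_zero' ℝ)]
        congr 1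
        push_cast
        ring
      rw [hexp]
      linarith [(hs k).2]
  · induction m, hm using Nat.le_induction with
    | base => norm_num [s]; linarith
    | succ k hk ih =>
      obtain ⟨j, rfl⟩ := Nat.exists_eq_add_of_le' (show 1 ≤ k by omega)
      have hrec : s (j + 1 + 1) γ = s (j + 1) γ + γ * s j γ := by rw [s]
      linarith [mul_neg_of_neg_of_pos hneg (hs j).1]
  · induction m, hm using Nat.le_induction with
    | base => norm_num [s]; linarith
    | succ k hk ih =>
      obtain ⟨j, rfl⟩ := Nat.exists_eq_add_of_le' (show 1 ≤ k by omega)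
      have hrec : s (j + 1 + 1) γ = s (j + 1) γ + γ * s j γ := by rw [s]
      linarith [mul_pos hpos (hs j).1]
end

section
/- For every integer m ≥ 0 and every real γ ≥ -1/4: (a) s_{m+2}(γ) ≥ -γ·s_m(γ); (b) s_{m+1}(γ) ≥ s_m(γ)/2; (c) s_{m+1}(γ) ≤ (1 + m(1+4γ))·s_m(γ)/2. -/
/-!
Write `d = 1 + 4γ ≥ 0`. Then `s` is the Lucas sequence `V` of `x² - x - γ`, whose discriminant is
`d`; let `f` be its companion `U`. The two are linked by `2 s_{m+1} = s_m + d f_m` and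
`2 f_{m+1} = s_m + f_m`, so both stay nonnegative, and `f_m ≤ m s_m` follows by induction.
The three claims are, respectively, `d (f_m + s_m) / 2 ≥ 0`, `d f_m / 2 ≥ 0` and
`d f_m ≤ m d s_m`.
-/

/-- The witness `f` is the `m`-th term of the companion sequence `f_0 = 0`, `f_1 = 1`,
`f_{m+2} = f_{m+1} + γ f_m`. -/
lemma exists_companion (γ : ℝ) (hγ : -1/4 ≤ γ) (m : ℕ) :
    ∃ f : ℝ, 0 ≤ f ∧ 0 ≤ s m γ ∧ f ≤ m * s m γ ∧
      s (m + 1) γ = (s m γ + (1 + 4 * γ) * f) / 2 := by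
  have hd : 0 ≤ 1 + 4 * γ := by linarith
  induction m with
  | zero => exact ⟨0, by simp [s]⟩
  | succ m ih =>
    obtain ⟨f, hf, hs, hfm, h⟩ := ih
    have hdf := mul_nonneg hd hf
    have hhalf : s m γ / 2 ≤ s (m + 1) γ := by linarith
    refine ⟨(f + s m γ) / 2, by linarith, by linarith, ?_, ?_⟩
    · have := mul_le_mul_of_nonneg_left hhalf (by positivity : (0 : ℝ) ≤ (m : ℝ) + 1)
      push_cast
      linarith
    · have h2 : s (m + 1 + 1) γ = s (m + 1) γ + γ * s m γ := by rw [s]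
      rw [h2, h]
      ring

theorem stmt_16 (m : ℕ) (γ : ℝ) (hγ : -1/4 ≤ γ) :
    s (m + 2) γ ≥ -γ * s m γ ∧
    s (m + 1) γ ≥ s m γ / 2 ∧
    s (m + 1) γ ≤ (1 + (m : ℝ) * (1 + 4 * γ)) * s m γ / 2 := by
  obtain ⟨f, hf, hs, hfm, h⟩ := exists_companion γ hγ m
  have hd : 0 ≤ 1 + 4 * γ := by linarith
  have hdf := mul_nonneg hd hf
  have hds := mul_nonneg hd hs
  have h2 : s (m + 2) γ = s (m + 1) γ + γ * s m γ := by rw [s]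
  refine ⟨by linarith, by linarith, ?_⟩
  have := mul_le_mul_of_nonneg_left hfm hd
  linarith
end

section
/- For every integer m ≥ 2: (a) -γ(2^m - 1)·s_{m-1}(γ) + s_{m+1}(γ) ≥ 1 for all γ ∈ [-1/4, 0]; (b) -γ(2^m - 1)·s_{m-1}(γ) + s_{m+1}(γ) ≤ 1 for all γ ≥ 0. -/
/-- Nonnegativity is carried along in the induction: `2 s_{k+2} - s_{k+1} = s_{k+1} + 2 γ s_k` is
at least `s_{k+1} - s_k / 2` because `s_k ≥ 0` and `γ ≥ -1/4`. -/
lemma s_le_two_mul_s_succ (γ : ℝ) (h : -1/4 ≤ γ) (k : ℕ) :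
    0 ≤ s k γ ∧ s k γ ≤ 2 * s (k + 1) γ := by
  induction k with
  | zero => norm_num [s]
  | succ k ih =>
    obtain ⟨h0, h1⟩ := ih
    refine ⟨by linarith, ?_⟩
    have e : s (k + 1 + 1) γ = s (k + 1) γ + γ * s k γ := by rw [s]
    rw [e]
    nlinarith [mul_nonneg (by linarith : 0 ≤ γ + 1/4) h0]

lemma s_increment (γ : ℝ) (k : ℕ) :
    -γ * ((2 : ℝ) ^ (k + 2) - 1) * s (k + 1) γ + s (k + 3) γ =
      (-γ * ((2 : ℝ) ^ (k + 1) - 1) * s k γ + s (k + 2) γ)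
        + γ * (((2 : ℝ) ^ (k + 1) - 1) * (s k γ - 2 * s (k + 1) γ)) := by
  have e1 : s (k + 3) γ = s (k + 2) γ + γ * s (k + 1) γ := by rw [s]
  rw [e1]
  ring

lemma weight_mul_nonpos (γ : ℝ) (h : -1/4 ≤ γ) (k : ℕ) :
    ((2 : ℝ) ^ (k + 1) - 1) * (s k γ - 2 * s (k + 1) γ) ≤ 0 := by
  have h1 : (1 : ℝ) ≤ 2 ^ (k + 1) := one_le_pow₀ (by norm_num)
  exact mul_nonpos_of_nonneg_of_nonpos (by linarith)
    (by linarith [(s_le_two_mul_s_succ γ h k).2])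

theorem stmt_17 (m : ℕ) (hm : 2 ≤ m) :
    (∀ γ : ℝ, -1/4 ≤ γ → γ ≤ 0 →
      -γ * ((2 : ℝ) ^ m - 1) * s (m - 1) γ + s (m + 1) γ ≥ 1) ∧
    (∀ γ : ℝ, 0 ≤ γ →
      -γ * ((2 : ℝ) ^ m - 1) * s (m - 1) γ + s (m + 1) γ ≤ 1) := by
  -- With `m = k + 1` the induction starts at `m = 1`, where equality holds.
  obtain ⟨k, rfl⟩ : ∃ k, m = k + 1 := ⟨m - 1, by omega⟩
  clear hm
  rw [Nat.add_sub_cancel]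
  constructor
  · intro γ h1 h2
    induction k with
    | zero => simp only [s, zero_add, pow_one]; linarith
    | succ k ih =>
      have := mul_nonneg_of_nonpos_of_nonpos h2 (weight_mul_nonpos γ h1 k)
      linarith [s_increment γ k]
  · intro γ h1
    induction k with
    | zero => simp only [s, zero_add, pow_one]; linarith
    | succ k ih =>
      have := mul_nonpos_of_nonneg_of_nonpos h1 (weight_mul_nonpos γ (by linarith) k)
      linarith [s_increment γ k]
end

section
/- For every real γ ∈ [-1/4, 0] and every integer m ≥ 1, (2^{m+1}·s_{m+2}(γ) - 1)/(2^{m+1} - 1) ≤ (2^m·s_{m+1}(γ) - 1)/(2^m - 1); that is, the sequence m ↦ (2^m s_{m+1}(γ) - 1)/(2^m - 1) is non-increasing in m. -/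
lemma s_add_two (k : ℕ) (γ : ℝ) : s (k + 2) γ = s (k + 1) γ + γ * s k γ := by
  rw [s]

lemma s_nonneg_and_le (γ : ℝ) (hγl : -1/4 ≤ γ) (k : ℕ) :
    0 ≤ s k γ ∧ s k γ ≤ 2 * s (k + 1) γ := by
  induction k with
  | zero => norm_num [s]
  | succ k ih =>
    obtain ⟨h0, h1⟩ := ih
    refine ⟨by linarith, ?_⟩
    rw [s_add_two]
    nlinarith [mul_nonneg (sub_nonneg.2 hγl) h0]

/-- Nonnegativity of the numerator left after clearing denominators, with `m = k + 1`. -/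
lemma numerator_nonneg (γ : ℝ) (hγl : -1/4 ≤ γ) (hγu : γ ≤ 0) (k : ℕ) :
    0 ≤ 2 * s (k + 3) γ - s (k + 2) γ - 1 - 2 * γ * 2 ^ (k + 1) * s (k + 1) γ := by
  induction k with
  | zero =>
    norm_num [s]
    linarith
  | succ k ih =>
    have hs := (s_nonneg_and_le γ hγl (k + 1)).2
    have hq : (1 : ℝ) ≤ 2 ^ (k + 1) := one_le_pow₀ (by norm_num)
    have h3 := s_add_two (k + 1) γ
    have h4 := s_add_two (k + 2) γ
    have hstep : 0 ≤ -γ * (2 * s (k + 2) γ - s (k + 1) γ) * (2 * 2 ^ (k + 1) - 1) :=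
      mul_nonneg (mul_nonneg (by linarith) (by linarith)) (by linarith)
    rw [pow_succ (2 : ℝ) (k + 1)]
    simp only [add_assoc, Nat.reduceAdd] at *
    rw [h4]
    rw [h3] at ih ⊢
    linarith

theorem stmt_18 (γ : ℝ) (hγl : -1/4 ≤ γ) (hγu : γ ≤ 0) (m : ℕ) (hm : 1 ≤ m) :
    ((2 : ℝ) ^ (m + 1) * s (m + 2) γ - 1) / ((2 : ℝ) ^ (m + 1) - 1)
      ≤ ((2 : ℝ) ^ m * s (m + 1) γ - 1) / ((2 : ℝ) ^ m - 1) := by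
  obtain ⟨k, rfl⟩ : ∃ k, m = k + 1 := ⟨m - 1, by omega⟩
  have hP := numerator_nonneg γ hγl hγu k
  have hq : (1 : ℝ) < 2 ^ (k + 1) := one_lt_pow₀ (by norm_num) (by omega)
  have h3 := s_add_two (k + 1) γ
  rw [pow_succ (2 : ℝ) (k + 1), div_le_div_iff₀ (by linarith) (by linarith)]
  have h := mul_nonneg (by linarith : (0 : ℝ) ≤ 2 ^ (k + 1)) hP
  simp only [add_assoc, Nat.reduceAdd] at *
  generalize (2 : ℝ) ^ (k + 1) = q at *
  rw [h3] at h ⊢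
  linarith
end

section
/- For every real γ ≥ -1/4 and every integer m ≥ 1, (2^m·s_{m+1}(γ) - 1)/(m(m+1)) ≤ (2^{m+1}·s_{m+2}(γ) - 1)/((m+1)(m+2)); that is, the sequence m ↦ (2^m s_{m+1}(γ) - 1)/(m(m+1)) is non-decreasing in m. -/
/-- The number `d` is the quantity `d (m + 1)` of the overview; the last conjunct is `D m ≥ 0`. -/
lemma exists_increment (γ : ℝ) (hγ : -1/4 ≤ γ) (m : ℕ) :
    ∃ d : ℝ, 0 ≤ d ∧ 0 ≤ (2 : ℝ) ^ m * s (m + 1) γ ∧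
      (2 : ℝ) ^ (m + 1) * s (m + 2) γ = 2 ^ m * s (m + 1) γ + (1 + 4 * γ) * d ∧
      d ≤ (m + 1) * (2 ^ m * s (m + 1) γ) ∧
      0 ≤ m * ((2 : ℝ) ^ (m + 1) * s (m + 2) γ) - (m + 2) * (2 ^ m * s (m + 1) γ) + 2 := by
  have ht : 0 ≤ 1 + 4 * γ := by linarith
  induction m with
  | zero =>
    refine ⟨1, ?_, ?_, ?_, ?_, ?_⟩ <;> norm_num [s]
    ring
  | succ m ih =>
    obtain ⟨d, hd, hc, hrec, hdc, hD⟩ := ih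
    have hnext : (2 : ℝ) ^ (m + 1 + 1) * s (m + 1 + 2) γ
        = 2 * (2 ^ (m + 1) * s (m + 2) γ) + 4 * γ * (2 ^ m * s (m + 1) γ) := by
      rw [show s (m + 1 + 2) γ = s (m + 2) γ + γ * s (m + 1) γ from rfl]
      ring
    rw [hnext, show m + 1 + 1 = m + 2 from rfl, hrec]
    rw [hrec] at hD
    generalize (2 : ℝ) ^ m * s (m + 1) γ = c at *
    have htd : 0 ≤ (1 + 4 * γ) * d := mul_nonneg ht hd
    have hmtd : 0 ≤ (m : ℝ) * ((1 + 4 * γ) * d) := by positivity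
    refine ⟨d + c, by linarith, by linarith, by ring, ?_, ?_⟩
    · push_cast
      linarith
    · have hstep : 0 ≤ (1 + 4 * γ) * ((m + 1) * c - d) := mul_nonneg ht (by linarith)
      push_cast
      linarith

theorem stmt_19 (γ : ℝ) (hγ : -1/4 ≤ γ) (m : ℕ) (hm : 1 ≤ m) :
    ((2 : ℝ) ^ m * s (m + 1) γ - 1) / ((m : ℝ) * (m + 1))
      ≤ ((2 : ℝ) ^ (m + 1) * s (m + 2) γ - 1) / (((m : ℝ) + 1) * ((m : ℝ) + 2)) := by
  obtain ⟨-, -, -, -, -, hD⟩ := exists_increment γ hγ m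
  have hm0 : (0 : ℝ) < m := by exact_mod_cast hm
  rw [div_le_div_iff₀ (by positivity) (by positivity)]
  have h := mul_nonneg (by positivity : (0 : ℝ) ≤ (m : ℝ) + 1) hD
  linarith
end
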